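/- (Diamond graph ℓ_p Poincaré-type inequality.) For every real p ≥ 2, every k ≥ 1, and every map f from the vertex set of 𝒟_k to ℓ_p, ∑_{i=0}^{k} α_i · ∑_{{x,y} ∈ D_i} ‖f(x) − f(y)‖_p^p ≤ α_{k+1} · ∑_{{x,y} ∈ E_k} ‖f(x) − f(y)‖_p^p, where α_{k+1} = 1. -/

import Mathlib

/-- Index type for the edges of the diamond graph `𝒟_k`: each edge of `𝒟_k`
is replaced by four edges in `𝒟_{k+1}`. -/
def DEdge : ℕ → Type
  | 0 => Unit
  | k + 1 => DEdge k × Fin 4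

/-- Vertices of the diamond graph `𝒟_k`: `𝒟_0` has two vertices `s, t`; `𝒟_{k+1}`
has the vertices of `𝒟_k` together with two new vertices (a level-`(k+1)` diagonal)
for each edge of `𝒟_k`. -/
def DVert : ℕ → Type
  | 0 => Fin 2
  | k + 1 => DVert k ⊕ (DEdge k × Bool)

/-- Endpoints of each edge of `𝒟_k`: the edge `{x,y}` of `𝒟_k` is replaced in `𝒟_{k+1}`
by the four edges `{x,a}, {a,y}, {y,b}, {b,x}` where `{a,b}` is the new diagonal. -/
def ends : (k : ℕ) → DEdge k → DVert k × DVert k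
  | 0, _ => ((0 : Fin 2), (1 : Fin 2))
  | k + 1, p =>
      ![((Sum.inl (ends k p.1).1 : DVert (k + 1)), (Sum.inr (p.1, false) : DVert (k + 1))),
        ((Sum.inr (p.1, false) : DVert (k + 1)), (Sum.inl (ends k p.1).2 : DVert (k + 1))),
        ((Sum.inl (ends k p.1).2 : DVert (k + 1)), (Sum.inr (p.1, true) : DVert (k + 1))),
        ((Sum.inr (p.1, true) : DVert (k + 1)), (Sum.inl (ends k p.1).1 : DVert (k + 1)))] p.2

instance instFintypeDEdge : ∀ k, Fintype (DEdge k)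
  | 0 => inferInstanceAs (Fintype Unit)
  | k + 1 => letI := instFintypeDEdge k; inferInstanceAs (Fintype (DEdge k × Fin 4))

instance instFintypeDVert : ∀ k, Fintype (DVert k)
  | 0 => inferInstanceAs (Fintype (Fin 2))
  | k + 1 =>
      letI := instFintypeDVert k; letI := instFintypeDEdge k
      inferInstanceAs (Fintype (DVert k ⊕ (DEdge k × Bool)))

/-- The inclusion of the vertices of `𝒟_i` into the vertices of `𝒟_{i+m}`. -/
def liftAdd : (i m : ℕ) → DVert i → DVert (i + m)
  | _, 0, v => v
  | i, m + 1, v => Sum.inl (liftAdd i m v)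

/-- The inclusion of the vertices of `𝒟_i` into the vertices of `𝒟_k` for `i ≤ k`. -/
def liftLE {i k : ℕ} (h : i ≤ k) (v : DVert i) : DVert k :=
  cast (congrArg DVert (Nat.add_sub_cancel' h)) (liftAdd i (k - i) v)

/-- The diamond graph `𝒟_k` as a simple graph on `DVert k`. -/
def diamondGraph (k : ℕ) : SimpleGraph (DVert k) :=
  SimpleGraph.fromRel (fun x y => ∃ e : DEdge k, ends k e = (x, y))

/-- The vertex `s` of `𝒟_0`. -/
def dS : DVert 0 := (0 : Fin 2)

/-- The vertex `t` of `𝒟_0`. -/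
def dT : DVert 0 := (1 : Fin 2)

/-- The first vertex of the level-`(j+1)` diagonal created from the edge `e` of `𝒟_j`,
viewed in `𝒟_k` (for `j + 1 ≤ k`). -/
def diag₁ {j k : ℕ} (h : j + 1 ≤ k) (e : DEdge j) : DVert k :=
  liftLE h (Sum.inr (e, false) : DVert (j + 1))

/-- The second vertex of the level-`(j+1)` diagonal created from the edge `e` of `𝒟_j`,
viewed in `𝒟_k` (for `j + 1 ≤ k`). -/
def diag₂ {j k : ℕ} (h : j + 1 ≤ k) (e : DEdge j) : DVert k :=
  liftLE h (Sum.inr (e, true) : DVert (j + 1))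

/-- The weights `α_i`: `α_0 = 2^{-k(p-2)}` and `α_i = 2^{-(k-i+1)(p-2)}` for `i ≥ 1`. -/
noncomputable def dAlpha (k : ℕ) (p : ℝ) (i : ℕ) : ℝ :=
  if i = 0 then (2 : ℝ) ^ (-(k : ℝ) * (p - 2))
  else (2 : ℝ) ^ (-((k : ℝ) - (i : ℝ) + 1) * (p - 2))

/-! In a Hilbert space the squared diagonals of a quadrilateral sum to at most the squares of its
four sides. Raising this to the power `p / 2 ≥ 1` costs a factor `4 ^ (p / 2 - 1) = 2 ^ (p - 2)`,
and the resulting four-point inequality for `‖x - y‖ ^ p` passes to `ℓ_p` sums because it can be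
checked coordinatewise. Going from `𝒟_j` to `𝒟_{j+1}` replaces every edge by a quadrilateral whose
diagonals are that edge and a new level-`(j+1)` pair. So, with `S_j` and `Δ_j` the sums of
`‖f x - f y‖ ^ p` over `E_j` and `D_{j+1}`, we get `2 ^ (2 - p) * (S_j + Δ_j) ≤ S_{j+1}`, and
iterating from `j = 0` to `j = k - 1` produces the weights `α_i` as powers of `2 ^ (2 - p)`. -/

/-- The four-point inequality with constant `c` for a kernel `ρ`: in every quadrilateral with
consecutive vertices `x, a, y, b`, the sum of `ρ` over the sides dominates `c` times the sum over
the diagonals. For `c = 1` and `ρ = dist ^ q` this says that the space has roundness `q`. -/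
def FourPointIneq {X R : Type*} [Add R] [Mul R] [LE R] (c : R) (ρ : X → X → R) : Prop :=
  ∀ x y a b, c * (ρ x y + ρ a b) ≤ ρ x a + ρ a y + ρ y b + ρ b x

theorem FourPointIneq.rpow {X : Type*} {c : ℝ} {ρ : X → X → ℝ} (h : FourPointIneq c ρ)
    (hc : 0 ≤ c) (hρ : ∀ x y, 0 ≤ ρ x y) {q : ℝ} (hq : 1 ≤ q) :
    FourPointIneq (4 ^ (1 - q) * c ^ q) fun x y ↦ ρ x y ^ q := by
  intro x y a b
  have hxy := hρ x y
  have hab := hρ a b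
  have power_mean : (ρ x a + ρ a y + ρ y b + ρ b x) ^ q ≤
      4 ^ (q - 1) * (ρ x a ^ q + ρ a y ^ q + ρ y b ^ q + ρ b x ^ q) := by
    simpa [Fin.sum_univ_four] using
      Real.rpow_sum_le_const_mul_sum_rpow_of_nonneg (Finset.univ : Finset (Fin 4))
        (f := ![ρ x a, ρ a y, ρ y b, ρ b x]) hq (by simp [Fin.forall_fin_succ, hρ])
  calc 4 ^ (1 - q) * c ^ q * (ρ x y ^ q + ρ a b ^ q)
      ≤ 4 ^ (1 - q) * c ^ q * (ρ x y + ρ a b) ^ q := by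
        gcongr
        exact Real.add_rpow_le_rpow_add hxy hab hq
    _ = 4 ^ (1 - q) * (c * (ρ x y + ρ a b)) ^ q := by
        rw [Real.mul_rpow hc (by positivity), mul_assoc]
    _ ≤ 4 ^ (1 - q) * (ρ x a + ρ a y + ρ y b + ρ b x) ^ q := by
        gcongr
        exact h x y a b
    _ ≤ 4 ^ (1 - q) * (4 ^ (q - 1) * (ρ x a ^ q + ρ a y ^ q + ρ y b ^ q + ρ b x ^ q)) := by
        gcongr
    _ = ρ x a ^ q + ρ a y ^ q + ρ y b ^ q + ρ b x ^ q := by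
        rw [← mul_assoc, ← Real.rpow_add (by norm_num)]
        simp

theorem fourPointIneq_dist_sq (V P : Type*) [NormedAddCommGroup V] [InnerProductSpace ℝ V]
    [MetricSpace P] [NormedAddTorsor V P] : FourPointIneq 1 fun x y : P ↦ dist x y ^ 2 := by
  intro x y a b
  -- Apollonius' theorem in the triangles `axy`, `bxy` and `mab`, where `m` is the midpoint of `xy`.
  have ha := EuclideanGeometry.dist_sq_add_dist_sq_eq_two_mul_dist_midpoint_sq_add_half_dist_sq
    a x y
  have hb := EuclideanGeometry.dist_sq_add_dist_sq_eq_two_mul_dist_midpoint_sq_add_half_dist_sq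
    b x y
  have hm := EuclideanGeometry.dist_sq_add_dist_sq_eq_two_mul_dist_midpoint_sq_add_half_dist_sq
    (midpoint ℝ x y) a b
  rw [dist_comm a x] at ha
  rw [dist_comm b y] at hb
  rw [dist_comm _ a, dist_comm _ b] at hm
  linarith [sq_nonneg (dist (midpoint ℝ x y) (midpoint ℝ a b))]

theorem fourPointIneq_norm_sub_rpow (E : Type*) [NormedAddCommGroup E] [InnerProductSpace ℝ E]
    {p : ℝ} (hp : 2 ≤ p) : FourPointIneq (2 ^ (2 - p)) fun x y : E ↦ ‖x - y‖ ^ p := by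
  have h := (fourPointIneq_dist_sq E E).rpow zero_le_one (fun _ _ ↦ by positivity)
    (show 1 ≤ p / 2 by linarith)
  have sq_rpow (r : ℝ) (hr : 0 ≤ r) (q : ℝ) : (r ^ 2) ^ q = r ^ (2 * q) := by
    rw [Real.rpow_mul hr, Real.rpow_two]
  have four_rpow : (4 : ℝ) ^ (1 - p / 2) = 2 ^ (2 - p) := by
    rw [show (4 : ℝ) = 2 ^ 2 by norm_num, sq_rpow 2 zero_le_two]
    ring_nf
  simpa only [four_rpow, dist_eq_norm, Real.one_rpow, mul_one, sq_rpow _ (norm_nonneg _),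
    mul_div_cancel₀ p two_ne_zero] using h

theorem fourPointIneq_lp {ι : Type*} {E : ι → Type*} [∀ i, NormedAddCommGroup (E i)]
    {p : ENNReal} (hp : 0 < p.toReal) {c : ℝ}
    (h : ∀ i, FourPointIneq c fun x y : E i ↦ ‖x - y‖ ^ p.toReal) :
    FourPointIneq c fun x y : lp E p ↦ ‖x - y‖ ^ p.toReal := by
  intro x y a b
  have hs (u v : lp E p) : HasSum (fun i ↦ ‖u i - v i‖ ^ p.toReal) (‖u - v‖ ^ p.toReal) :=
    lp.hasSum_norm hp (u - v)
  exact hasSum_le (fun i ↦ h i (x i) (y i) (a i) (b i)) (((hs x y).add (hs a b)).mul_left c)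
    ((((hs x a).add (hs a y)).add (hs y b)).add (hs b x))

theorem pow_mul_zero_add_sum_pow_mul_le_last {R : Type*} [Semiring R] [PartialOrder R]
    [IsOrderedRing R] {c : R} (hc : 0 ≤ c) {k : ℕ} (S : Fin (k + 1) → R) (Δ : Fin k → R)
    (h : ∀ j : Fin k, c * (S j.castSucc + Δ j) ≤ S j.succ) :
    c ^ k * S 0 + ∑ j : Fin k, c ^ (k - (j : ℕ)) * Δ j ≤ S (Fin.last k) := by
  induction k with
  | zero => simp
  | succ k ih =>
    have ih' := ih (fun i ↦ S i.castSucc) (fun j ↦ Δ j.castSucc) fun j ↦ h j.castSucc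
    have pow_succ_sub (j : Fin k) : c ^ (k + 1 - (j : ℕ)) = c * c ^ (k - (j : ℕ)) := by
      rw [Nat.succ_sub j.is_le', pow_succ']
    calc c ^ (k + 1) * S 0 + ∑ j : Fin (k + 1), c ^ (k + 1 - (j : ℕ)) * Δ j
        = c * (c ^ k * S 0 + ∑ j : Fin k, c ^ (k - (j : ℕ)) * Δ j.castSucc
            + Δ (Fin.last k)) := by
          simp [Fin.sum_univ_castSucc, pow_succ_sub, pow_succ', mul_add, mul_assoc,
            Finset.mul_sum, add_assoc]
      _ ≤ c * (S (Fin.last k).castSucc + Δ (Fin.last k)) := by gcongr; exact ih'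
      _ ≤ S (Fin.last (k + 1)) := h (Fin.last k)

namespace DVert

variable {k : ℕ}

/-- The inclusion of the vertices of `𝒟_k` into those of `𝒟_{k+1}`. Unlike a bare `Sum.inl`, its
type mentions `DVert (k + 1)` syntactically, as rewriting requires. -/
def inl (v : DVert k) : DVert (k + 1) := Sum.inl v

/-- The two new vertices (indexed by `Bool`) of the square replacing the edge `e` of `𝒟_k`. -/
def inr (e : DEdge k) (b : Bool) : DVert (k + 1) := Sum.inr (e, b)

end DVert

theorem liftLE_add_right (i m : ℕ) (v : DVert i) :
    liftLE (Nat.le_add_right i m) v = liftAdd i m v := by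
  have cast_liftAdd (n : ℕ) (h : n = m) :
      cast (congrArg (fun n ↦ DVert (i + n)) h) (liftAdd i n v) = liftAdd i m v := by
    subst h
    rfl
  exact cast_liftAdd _ (Nat.add_sub_cancel_left i m)

theorem liftLE_rfl {k : ℕ} (v : DVert k) : liftLE le_rfl v = v :=
  liftLE_add_right k 0 v

theorem liftLE_succ {i k : ℕ} (h : i ≤ k) (v : DVert i) :
    liftLE (Nat.le_succ_of_le h) v = (liftLE h v).inl := by
  obtain ⟨m, rfl⟩ := Nat.exists_eq_add_of_le h
  rw [liftLE_add_right i m]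
  exact liftLE_add_right i (m + 1) v

theorem liftLE_inl {i k : ℕ} (h : i + 1 ≤ k) (v : DVert i) :
    liftLE h v.inl = liftLE (Nat.le_of_succ_le h) v := by
  induction k, h using Nat.le_induction with
  | base => rw [liftLE_rfl, liftLE_succ le_rfl, liftLE_rfl]
  | succ k h ih => rw [liftLE_succ h, ih, liftLE_succ (Nat.le_of_succ_le h)]

section DiamondSums

variable {X M : Type*} [AddCommMonoid M] {k : ℕ}

/-- The sum of the kernel `ρ` over the images under `f` of the edges of `𝒟_k`. -/
def edgeSum (ρ : X → X → M) (f : DVert k → X) : M :=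
  ∑ e : DEdge k, ρ (f (ends k e).1) (f (ends k e).2)

/-- The sum of the kernel `ρ` over the images under `f` of the top-level diagonals of `𝒟_{k+1}`. -/
def diagonalSum (ρ : X → X → M) (f : DVert (k + 1) → X) : M :=
  ∑ e : DEdge k, ρ (f (.inr e false)) (f (.inr e true))

theorem edgeSum_zero (ρ : X → X → M) (f : DVert 0 → X) : edgeSum ρ f = ρ (f dS) (f dT) :=
  Fintype.sum_unique (ι := Unit) _

theorem edgeSum_succ (ρ : X → X → M) (f : DVert (k + 1) → X) :
    edgeSum ρ f = ∑ e : DEdge k,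
      (ρ (f (ends k e).1.inl) (f (.inr e false)) + ρ (f (.inr e false)) (f (ends k e).2.inl)
        + ρ (f (ends k e).2.inl) (f (.inr e true)) + ρ (f (.inr e true)) (f (ends k e).1.inl)) :=
  (Fintype.sum_prod_type (α₁ := DEdge k) (α₂ := Fin 4) _).trans <|
    Finset.sum_congr rfl fun _ _ ↦ Fin.sum_univ_four _

variable {R : Type*} [Semiring R] [PartialOrder R] [IsOrderedRing R] {c : R} {ρ : X → X → R}

theorem FourPointIneq.mul_edgeSum_add_diagonalSum_le (hρ : FourPointIneq c ρ)
    (f : DVert (k + 1) → X) :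
    c * (edgeSum ρ (fun v ↦ f v.inl) + diagonalSum ρ f) ≤ edgeSum ρ f := by
  rw [edgeSum_succ, edgeSum, diagonalSum, ← Finset.sum_add_distrib, Finset.mul_sum]
  exact Finset.sum_le_sum fun _ _ ↦ hρ _ _ _ _

theorem FourPointIneq.sum_diagonals_le_sum_edges (hρ : FourPointIneq c ρ) (hc : 0 ≤ c)
    (f : DVert k → X) :
    c ^ k * ρ (f (liftLE (Nat.zero_le k) dS)) (f (liftLE (Nat.zero_le k) dT))
      + ∑ j : Fin k, c ^ (k - (j : ℕ)) *
          ∑ e : DEdge (j : ℕ), ρ (f (diag₁ j.isLt e)) (f (diag₂ j.isLt e))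
    ≤ ∑ e : DEdge k, ρ (f (ends k e).1) (f (ends k e).2) := by
  let restrict (i : ℕ) (h : i ≤ k) : DVert i → X := fun v ↦ f (liftLE h v)
  have level_le (j : Fin k) :
      c * (edgeSum ρ (restrict j j.is_le') + diagonalSum ρ (restrict (j + 1) j.isLt)) ≤
        edgeSum ρ (restrict (j + 1) j.isLt) := by
    simpa only [restrict, liftLE_inl] using
      hρ.mul_edgeSum_add_diagonalSum_le (restrict (j + 1) j.isLt)
  have restrict_zero : edgeSum ρ (restrict 0 k.zero_le) =
      ρ (f (liftLE k.zero_le dS)) (f (liftLE k.zero_le dT)) := edgeSum_zero ρ _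
  have restrict_last : restrict k le_rfl = f := funext fun v ↦ congrArg f (liftLE_rfl v)
  have iterated := pow_mul_zero_add_sum_pow_mul_le_last hc
    (fun i ↦ edgeSum ρ (restrict i i.is_le))
    (fun j ↦ diagonalSum ρ (restrict (j + 1) j.isLt)) level_le
  rw [← restrict_zero]
  exact iterated.trans_eq (congrArg (edgeSum ρ) restrict_last)

end DiamondSums

theorem dAlpha_zero (k : ℕ) (p : ℝ) : dAlpha k p 0 = ((2 : ℝ) ^ (2 - p)) ^ k := by
  rw [dAlpha, if_pos rfl, ← Real.rpow_mul_natCast zero_le_two]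
  ring_nf

theorem dAlpha_succ {k j : ℕ} (hj : j ≤ k) (p : ℝ) :
    dAlpha k p (j + 1) = ((2 : ℝ) ^ (2 - p)) ^ (k - j) := by
  rw [dAlpha, if_neg j.succ_ne_zero, ← Real.rpow_mul_natCast zero_le_two, Nat.cast_sub hj]
  push_cast
  ring_nf

theorem diamond_poincare_general {ι : Type*} {E : ι → Type*} [∀ i, NormedAddCommGroup (E i)]
    [∀ i, InnerProductSpace ℝ (E i)] (p : ℝ) (hp : 2 ≤ p) (k : ℕ)
    (f : DVert k → lp E (ENNReal.ofReal p)) :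
    dAlpha k p 0 * ‖f (liftLE (Nat.zero_le k) dS) - f (liftLE (Nat.zero_le k) dT)‖ ^ p
      + ∑ j : Fin k, dAlpha k p ((j : ℕ) + 1) *
          ∑ e : DEdge (j : ℕ), ‖f (diag₁ j.isLt e) - f (diag₂ j.isLt e)‖ ^ p
    ≤ dAlpha k p (k + 1) *
        ∑ e : DEdge k, ‖f (ends k e).1 - f (ends k e).2‖ ^ p := by
  have hp0 : 0 < p := by linarith
  have toReal_ofReal : (ENNReal.ofReal p).toReal = p := ENNReal.toReal_ofReal hp0.le
  have four_point :
      FourPointIneq (2 ^ (2 - p)) fun x y : lp E (ENNReal.ofReal p) ↦ ‖x - y‖ ^ p := by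
    simpa only [toReal_ofReal] using
      fourPointIneq_lp (E := E) (p := ENNReal.ofReal p) (by rwa [toReal_ofReal]) fun i ↦ by
        simpa only [toReal_ofReal] using fourPointIneq_norm_sub_rpow (E i) hp
  have weight (j : Fin k) := dAlpha_succ j.isLt.le p
  simpa only [dAlpha_zero, weight, dAlpha_succ le_rfl, Nat.sub_self, pow_zero, one_mul] using
    four_point.sum_diagonals_le_sum_edges (by positivity) f

/-- Diamond graph `ℓ_p` Poincaré-type inequality: for `p ≥ 2` and `f : 𝒟_k → ℓ_p`,
`∑_{i=0}^{k} α_i ∑_{{x,y} ∈ D_i} ‖f x - f y‖^p ≤ α_{k+1} ∑_{{x,y} ∈ E_k} ‖f x - f y‖^p`,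
where the level-`0` "diagonal" is the pair `{s,t}` and for `1 ≤ i ≤ k` the level-`i`
diagonals are indexed by the edges of `𝒟_{i-1}`. -/
theorem diamond_poincare (p : ℝ) (hp : 2 ≤ p) (k : ℕ) (hk : 1 ≤ k)
    (f : DVert k → lp (fun _ : ℕ => ℝ) (ENNReal.ofReal p)) :
    dAlpha k p 0 * ‖f (liftLE (Nat.zero_le k) dS) - f (liftLE (Nat.zero_le k) dT)‖ ^ p
      + ∑ j : Fin k, dAlpha k p ((j : ℕ) + 1) *
          ∑ e : DEdge (j : ℕ), ‖f (diag₁ j.isLt e) - f (diag₂ j.isLt e)‖ ^ p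
    ≤ dAlpha k p (k + 1) *
        ∑ e : DEdge k, ‖f (ends k e).1 - f (ends k e).2‖ ^ p :=
  diamond_poincare_general p hp k f
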